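/- For every pair of integers (r,t) with either (r = 3 and t = 4) or (r ≥ 4 and 2 ≤ t ≤ r+1), and for all sufficiently large e, there exists a set M of t distinct monomials of degree e in r variables such that every one of the r variables divides at least one element of M, and the function h(i) = the number of monomials of degree i dividing at least one element of M is not log-concave. (There exist infinite families of non-log-concave pure O-sequences of codimension r and type t for these pairs.) -/

import Mathlib

/-!
Take one generator `f` of degree `e` with large exponents at exactly three variables, and, for
every variable `k` in a set `K`, one generator `g k` of degree `e` in which the variables other
than `k` have small exponents. In codegree `d`, neither too small nor comparable with `e`, two of
these generators have no common divisor, the divisors of `f` correspond to the monomials of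
degree `d` in three variables, and the number of divisors of `g k` is a constant. So the pure
`O`-sequence is `C(d + 2, 2) + c` there, with `c` constant, and it fails to be log-concave at `d`
as soon as `C(d + 2, 2) < c`. In three variables, taking all small exponents equal to `1` gives
`c = 3 * 2 ^ 2`, which works at `d = 3`; in `r ≥ 4` variables a single `g k` with small exponents
`4` already contributes `5 ^ (r - 1)`, which is enough at `d = 4 * (r - 1) + 1`.
-/

open Finset

lemma multichoose_three (d : ℕ) : Nat.multichoose 3 d = (d + 2).choose 2 := by
  rw [Nat.multichoose_eq, show 3 + d - 1 = d + 2 by omega, Nat.choose_symm_add]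

lemma sq_choose_two_add_lt {d c : ℕ} (h : (d + 2).choose 2 < c) :
    ((d + 2).choose 2 + c) ^ 2 < ((d + 3).choose 2 + c) * ((d + 1).choose 2 + c) := by
  have choose_succ (n : ℕ) : (n + 1).choose 2 = n.choose 2 + n := by
    rw [Nat.choose_succ_succ' n 1, Nat.choose_one_right, add_comm]
  have two_mul_choose : (d + 2) * (d + 1) = (d + 2).choose 2 * 2 := by
    simpa using Nat.add_one_mul_choose_eq (d + 1) 1
  have choose_prev := choose_succ (d + 1)
  rw [choose_succ (d + 2)]
  -- The right-hand side exceeds the left-hand side by exactly `c - (d + 2).choose 2`.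
  nlinarith

section

variable {ι : Type*} [Fintype ι]

/-- The pure `O`-sequence generated by a set `M` of monomials of the same degree: its value at `i`
is the number of monomials of degree `i` dividing an element of `M`. Monomials in the variables
`ι` are encoded by their exponent vectors. -/
noncomputable def pureOSequence (M : Finset (ι → ℕ)) (i : ℕ) : ℕ :=
  {b : ι → ℕ | (∑ j, b j = i) ∧ ∃ a ∈ M, ∀ j, b j ≤ a j}.ncard

/-- There is a pure `O`-sequence of type `t` and socle degree `e` that involves all the variables
`ι`, so that its codimension is the cardinality of `ι`, and that is not log-concave. -/
def ExistsNotLogConcave (ι : Type*) [Fintype ι] (t e : ℕ) : Prop :=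
  ∃ M : Finset (ι → ℕ),
    M.card = t ∧
    (∀ a ∈ M, ∑ j, a j = e) ∧
    (∀ j, ∃ a ∈ M, 1 ≤ a j) ∧
    ∃ i, 1 ≤ i ∧ pureOSequence M i ^ 2 < pureOSequence M (i - 1) * pureOSequence M (i + 1)

section

variable [DecidableEq ι]

/-- The monomials of degree `i` dividing the monomial `a`. -/
def divisorsOfDegree (a : ι → ℕ) (i : ℕ) : Finset (ι → ℕ) :=
  {b ∈ Iic a | ∑ j, b j = i}

/-- The monomial obtained from `a` by changing the exponent of the variable `k` alone so as to
reach the degree `e`. The subtraction truncates, so the degree of the result is `e` only if the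
other variables contribute at most `e`. -/
def adjustDegree (a : ι → ℕ) (k : ι) (e : ℕ) : ι → ℕ :=
  Function.update a k (e - ∑ j ∈ {k}ᶜ, a j)

lemma mem_divisorsOfDegree {a b : ι → ℕ} {i : ℕ} :
    b ∈ divisorsOfDegree a i ↔ b ≤ a ∧ ∑ j, b j = i := by
  simp [divisorsOfDegree]

lemma pureOSequence_eq_card_biUnion (M : Finset (ι → ℕ)) (i : ℕ) :
    pureOSequence M i = #(M.biUnion (divisorsOfDegree · i)) := by
  rw [pureOSequence, ← Set.ncard_coe_finset]
  congr 1
  ext b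
  simp only [Set.mem_ofPred_eq, coe_biUnion, Set.mem_iUnion, mem_coe, mem_divisorsOfDegree,
    Pi.le_def, exists_prop]
  tauto

lemma pureOSequence_image {κ : Type*} (g : κ → ι → ℕ) (K : Finset κ) (i : ℕ)
    (h : (K : Set κ).PairwiseDisjoint fun k => divisorsOfDegree (g k) i) :
    pureOSequence (K.image g) i = ∑ k ∈ K, #(divisorsOfDegree (g k) i) := by
  rw [pureOSequence_eq_card_biUnion, image_biUnion, card_biUnion h]

lemma pureOSequence_insert (f : ι → ℕ) (M : Finset (ι → ℕ)) (i : ℕ)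
    (h : ∀ a ∈ M, Disjoint (divisorsOfDegree f i) (divisorsOfDegree a i)) :
    pureOSequence (insert f M) i = #(divisorsOfDegree f i) + pureOSequence M i := by
  rw [pureOSequence_eq_card_biUnion, pureOSequence_eq_card_biUnion, biUnion_insert,
    card_union_of_disjoint ((disjoint_biUnion_right _ _ _).2 h)]

lemma disjoint_divisorsOfDegree_of_lt {a a' : ι → ℕ} {i : ℕ} (k : ι)
    (h : a' k + ∑ j ∈ {k}ᶜ, a j < i) :
    Disjoint (divisorsOfDegree a i) (divisorsOfDegree a' i) := by
  refine disjoint_left.2 fun b hb hb' => h.not_ge ?_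
  obtain ⟨hba, rfl⟩ := mem_divisorsOfDegree.1 hb
  rw [Fintype.sum_eq_add_sum_compl k]
  exact add_le_add ((mem_divisorsOfDegree.1 hb').1 k) (sum_le_sum fun j _ => hba j)

lemma card_divisorsOfDegree_symm {a : ι → ℕ} {i d : ℕ} (h : i + d = ∑ j, a j) :
    #(divisorsOfDegree a i) = #(divisorsOfDegree a d) := by
  have sub_mem {m n : ℕ} (hmn : m + n = ∑ j, a j) {b : ι → ℕ} (hb : b ∈ divisorsOfDegree a m) :
      a - b ∈ divisorsOfDegree a n := by
    obtain ⟨hba, rfl⟩ := mem_divisorsOfDegree.1 hb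
    refine mem_divisorsOfDegree.2 ⟨tsub_le_self, ?_⟩
    simp only [Pi.sub_apply]
    rw [sum_tsub_distrib _ fun j _ => hba j, ← hmn, Nat.add_sub_cancel_left]
  have sub_sub_cancel {m : ℕ} {b : ι → ℕ} (hb : b ∈ divisorsOfDegree a m) : a - (a - b) = b :=
    tsub_tsub_cancel_of_le (mem_divisorsOfDegree.1 hb).1
  exact card_nbij' (a - ·) (a - ·) (fun _ => sub_mem h) (fun _ => sub_mem (by omega))
    (fun _ => sub_sub_cancel) (fun _ => sub_sub_cancel)

lemma card_divisorsOfDegree_eq_multichoose {a : ι → ℕ} {s : Finset ι} {d : ℕ}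
    (hs : ∀ j ∈ s, d ≤ a j) (hs' : ∀ j ∉ s, a j = 0) :
    #(divisorsOfDegree a d) = (#s).multichoose d := by
  rw [← card_finsuppAntidiag_nat_eq_multichoose]
  refine card_equiv Finsupp.equivFunOnFinite.symm fun b => ?_
  rw [mem_divisorsOfDegree, mem_finsuppAntidiag, Finsupp.coe_equivFunOnFinite_symm]
  have sum_eq (hb : ∀ j ∉ s, b j = 0) : ∑ j ∈ s, b j = ∑ j, b j :=
    sum_subset (subset_univ s) fun j _ hj => hb j hj
  constructor
  · rintro ⟨hba, rfl⟩
    have hb j (hj : j ∉ s) : b j = 0 := Nat.le_zero.1 (hs' j hj ▸ hba j)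
    exact ⟨sum_eq hb, fun j hj => by_contra fun hjs => Finsupp.mem_support_iff.1 hj (hb j hjs)⟩
  · rintro ⟨rfl, hbs⟩
    have hb j (hj : j ∉ s) : b j = 0 := Finsupp.notMem_support_iff.1 fun h => hj (hbs h)
    refine ⟨fun j => ?_, (sum_eq hb).symm⟩
    by_cases hj : j ∈ s
    · exact (single_le_sum_of_canonicallyOrdered hj).trans (hs j hj)
    · simp [hb j hj]

lemma adjustDegree_self (a : ι → ℕ) (k : ι) (e : ℕ) :
    adjustDegree a k e k = e - ∑ j ∈ {k}ᶜ, a j :=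
  Function.update_self _ _ _

lemma sum_compl_adjustDegree (a : ι → ℕ) (k : ι) (e : ℕ) :
    ∑ j ∈ {k}ᶜ, adjustDegree a k e j = ∑ j ∈ {k}ᶜ, a j :=
  sum_update_of_notMem (by simp) _ _

lemma sum_adjustDegree {a : ι → ℕ} {k : ι} {e : ℕ} (h : ∑ j ∈ {k}ᶜ, a j ≤ e) :
    ∑ j, adjustDegree a k e j = e := by
  rw [Fintype.sum_eq_add_sum_compl k, sum_compl_adjustDegree, adjustDegree_self,
    Nat.sub_add_cancel h]

lemma adjustDegree_of_ne {a : ι → ℕ} {j k : ι} (h : j ≠ k) (e : ℕ) :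
    adjustDegree a k e j = a j :=
  Function.update_of_ne h _ _

lemma adjustDegree_update (a : ι → ℕ) (k : ι) (c e : ℕ) :
    adjustDegree (Function.update a k c) k e = adjustDegree a k e := by
  rw [adjustDegree, adjustDegree, Function.update_idem, sum_update_of_notMem (by simp)]

lemma adjustDegree_sum (a : ι → ℕ) (k : ι) : adjustDegree a k (∑ j, a j) = a := by
  rw [adjustDegree, Fintype.sum_eq_add_sum_compl k, Nat.add_sub_cancel, Function.update_eq_self]

lemma card_divisorsOfDegree_eq_prod {a : ι → ℕ} {k : ι} {i : ℕ} (hk : i ≤ a k)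
    (hi : ∑ j ∈ {k}ᶜ, a j ≤ i) :
    #(divisorsOfDegree a i) = ∏ j ∈ {k}ᶜ, (a j + 1) := by
  have card_box : #(Iic (Function.update a k 0)) = ∏ j ∈ {k}ᶜ, (a j + 1) := by
    rw [Pi.card_Iic, Fintype.prod_eq_mul_prod_compl k, Function.update_self, Nat.card_Iic, zero_add,
      one_mul]
    refine prod_congr rfl fun j hj => ?_
    rw [Function.update_of_ne (by simpa using hj), Nat.card_Iic]
  have mem_box {c : ι → ℕ} :
      c ∈ Iic (Function.update a k 0) ↔ c k = 0 ∧ ∀ j ≠ k, c j ≤ a j := by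
    rw [mem_Iic, le_update_iff, Nat.le_zero]
  rw [← card_box]
  refine card_nbij' (Function.update · k 0) (adjustDegree · k i) ?_ ?_ ?_ ?_
  · intro b hb
    have hba := (mem_divisorsOfDegree.1 hb).1
    exact mem_Iic.2 (update_le_update_iff.2 ⟨le_rfl, fun j _ => hba j⟩)
  · intro c hc
    obtain ⟨-, hca⟩ := mem_box.1 hc
    have hsum : ∑ j ∈ {k}ᶜ, c j ≤ i :=
      (sum_le_sum fun j hj => hca j (by simpa using hj)).trans hi
    exact mem_divisorsOfDegree.2
      ⟨update_le_iff.2 ⟨(Nat.sub_le _ _).trans hk, hca⟩, sum_adjustDegree hsum⟩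
  · intro b hb
    obtain ⟨-, rfl⟩ := mem_divisorsOfDegree.1 hb
    exact (adjustDegree_update b k 0 _).trans (adjustDegree_sum b k)
  · intro c hc
    obtain ⟨hck, -⟩ := mem_box.1 hc
    simp only [adjustDegree, Function.update_idem, ← hck, Function.update_eq_self]

lemma divisorsOfDegree_sum (a : ι → ℕ) : divisorsOfDegree a (∑ j, a j) = {a} := by
  ext b
  rw [mem_divisorsOfDegree, mem_singleton]
  refine ⟨fun ⟨hba, hsum⟩ => funext fun j => ?_, fun h => by simp [h]⟩
  exact (sum_eq_sum_iff_of_le fun j _ => hba j).1 hsum j (mem_univ j)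

end

lemma pureOSequence_socleDegree_eq_card {M : Finset (ι → ℕ)} {e : ℕ} (hM : ∀ a ∈ M, ∑ j, a j = e) :
    pureOSequence M e = #M := by
  classical
  have : ∀ a ∈ M, divisorsOfDegree a e = {a} := fun a ha => hM a ha ▸ divisorsOfDegree_sum a
  rw [pureOSequence_eq_card_biUnion, biUnion_congr rfl this, biUnion_singleton_eq_self]

lemma exists_sum_eq_of_card_mul_le {s : Finset ι} (hs : s.Nonempty) {N e : ℕ}
    (h : #s * N ≤ e) :
    ∃ f : ι → ℕ, ∑ j, f j = e ∧ (∀ j ∈ s, N ≤ f j) ∧ ∀ j ∉ s, f j = 0 := by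
  classical
  obtain ⟨k, hk⟩ := hs
  refine ⟨(fun j => if j ∈ s then N else 0) + Pi.single k (e - #s * N), ?_, fun j hj => ?_,
    fun j hj => ?_⟩
  · simp [sum_add_distrib, Nat.add_sub_of_le h]
  · simp [hj]
  · simp [hj, ne_of_mem_of_not_mem hk hj |>.symm]

lemma add_card_sub_one_mul_le_sum {f : ι → ℕ} {s : Finset ι} {N : ℕ} (hf : ∀ j ∈ s, N ≤ f j)
    (k : ι) : f k + (#s - 1) * N ≤ ∑ j, f j := by
  classical
  calc f k + (#s - 1) * N ≤ f k + #(s.erase k) * N := by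
        gcongr
        exact pred_card_le_card_erase
    _ ≤ f k + ∑ j ∈ s.erase k, f j := by
        gcongr
        exact card_nsmul_le_sum _ _ _ fun j hj => hf j (mem_of_mem_erase hj)
    _ ≤ f k + ∑ j ∈ {k}ᶜ, f j := by
        gcongr
        intro j hj
        simpa using ne_of_mem_erase hj
    _ = ∑ j, f j := (Fintype.sum_eq_add_sum_compl k f).symm

section

variable [DecidableEq ι]

lemma pureOSequence_insert_image {f : ι → ℕ} {g : ι → ι → ℕ} {K : Finset ι} {J i : ℕ}
    (hg : ∀ k ∈ K, ∑ j ∈ {k}ᶜ, g k j < J) (hf : ∀ k ∈ K, f k + J ≤ i) (hi : 2 * J ≤ i) :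
    pureOSequence (insert f (K.image g)) i =
      #(divisorsOfDegree f i) + ∑ k ∈ K, #(divisorsOfDegree (g k) i) := by
  rw [pureOSequence_insert, pureOSequence_image]
  · intro k hk l hl hkl
    have hlk : g l k ≤ ∑ j ∈ {l}ᶜ, g l j :=
      single_le_sum_of_canonicallyOrdered (by simpa using hkl)
    have := hg k hk
    have := hg l hl
    exact disjoint_divisorsOfDegree_of_lt k (by omega)
  · refine forall_mem_image.2 fun k hk => (disjoint_divisorsOfDegree_of_lt k ?_).symm
    have := hg k hk
    have := hf k hk
    omega

lemma card_insert_image {f : ι → ℕ} {g : ι → ι → ℕ} {K : Finset ι} {J e : ℕ}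
    (hfe : ∑ j, f j = e) (hge : ∀ k ∈ K, ∑ j, g k j = e)
    (hg : ∀ k ∈ K, ∑ j ∈ {k}ᶜ, g k j < J) (hf : ∀ k ∈ K, f k + J ≤ e) (he : 2 * J ≤ e) :
    #(insert f (K.image g)) = #K + 1 := by
  have hM : ∀ a ∈ insert f (K.image g), ∑ j, a j = e := by simpa [hfe] using hge
  have card_divisors {a : ι → ℕ} (ha : ∑ j, a j = e) : #(divisorsOfDegree a e) = 1 := by
    rw [← ha, divisorsOfDegree_sum, card_singleton]
  rw [← pureOSequence_socleDegree_eq_card hM, pureOSequence_insert_image hg hf he,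
    card_divisors hfe, sum_congr rfl fun k hk => card_divisors (hge k hk),
    card_eq_sum_ones, add_comm]

lemma pureOSequence_insert_image_codegree {f : ι → ℕ} {g : ι → ι → ℕ} {s K : Finset ι}
    {J e i d : ℕ} (hfe : ∑ j, f j = e) (hge : ∀ k ∈ K, ∑ j, g k j = e)
    (hfs : ∀ j ∈ s, d ≤ f j) (hfs' : ∀ j ∉ s, f j = 0)
    (hg : ∀ k ∈ K, ∑ j ∈ {k}ᶜ, g k j < J) (hf : ∀ k ∈ K, f k + J ≤ i) (hi : 2 * J ≤ i)
    (hid : i + d = e) (hd : J ≤ d + 1) :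
    pureOSequence (insert f (K.image g)) i =
      (#s).multichoose d + ∑ k ∈ K, ∏ j ∈ {k}ᶜ, (g k j + 1) := by
  rw [pureOSequence_insert_image hg hf hi, card_divisorsOfDegree_symm (hid.trans hfe.symm),
    card_divisorsOfDegree_eq_multichoose hfs hfs']
  congr 1
  refine sum_congr rfl fun k hk => card_divisorsOfDegree_eq_prod ?_ ?_
  all_goals
    have hdeg := hge k hk
    rw [Fintype.sum_eq_add_sum_compl k] at hdeg
    have := hg k hk
    omega

theorem existsNotLogConcave_of_insert_image {f : ι → ℕ} {g : ι → ι → ℕ} {s K : Finset ι}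
    {J e : ℕ} (hs : #s = 3) (hfe : ∑ j, f j = e) (hge : ∀ k ∈ K, ∑ j, g k j = e)
    (hfs : ∀ j ∈ s, J + 1 ≤ f j) (hfs' : ∀ j ∉ s, f j = 0) (hg : ∀ k ∈ K, ∑ j ∈ {k}ᶜ, g k j < J)
    (hcover : ∃ k ∈ K, ∀ j, 1 ≤ g k j)
    (hc : (J + 2).choose 2 < ∑ k ∈ K, ∏ j ∈ {k}ᶜ, (g k j + 1)) (he : 3 * (J + 1) ≤ e) :
    ExistsNotLogConcave ι (#K + 1) e := by
  have hf k : f k + 2 * (J + 1) ≤ e := by simpa [hs, hfe] using add_card_sub_one_mul_le_sum hfs k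
  have codegree i d (hid : i + d = e) (hd : J ≤ d + 1) (hd' : d ≤ J + 1) :
      pureOSequence (insert f (K.image g)) i =
        (d + 2).choose 2 + ∑ k ∈ K, ∏ j ∈ {k}ᶜ, (g k j + 1) := by
    rw [pureOSequence_insert_image_codegree hfe hge (fun j hj => hd'.trans (hfs j hj)) hfs' hg
      (fun k _ => by have := hf k; omega) (by omega) hid hd, hs, multichoose_three]
  have hcard : #(insert f (K.image g)) = #K + 1 :=
    card_insert_image hfe hge hg (fun k _ => by have := hf k; omega) (by omega)
  have hdeg : ∀ a ∈ insert f (K.image g), ∑ j, a j = e := by simpa [hfe] using hge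
  obtain ⟨k, hk, hgk⟩ := hcover
  obtain ⟨d, rfl⟩ : ∃ d, J = d + 1 := Nat.exists_eq_add_one.2 (Nat.zero_lt_of_lt (hg k hk))
  refine ⟨insert f (K.image g), hcard, hdeg, fun j => ⟨g k, by grind, hgk j⟩, e - (d + 1),
    by omega, ?_⟩
  rw [codegree (e - (d + 1)) (d + 1) (by omega) (by omega) (by omega),
    codegree (e - (d + 1) - 1) (d + 2) (by omega) (by omega) (by omega),
    codegree (e - (d + 1) + 1) d (by omega) (by omega) (by omega)]
  exact sq_choose_two_add_lt hc

/-- The exponents of the generator indexed by `k` are those of `a k`, except at `k` itself, where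
the value of `a k` is discarded. -/
theorem existsNotLogConcave_of_choose_lt {J e : ℕ} {K : Finset ι} (a : ι → ι → ℕ)
    (hι : 3 ≤ Fintype.card ι) (ha : ∀ k ∈ K, ∑ j ∈ {k}ᶜ, a k j < J)
    (hcover : ∃ k ∈ K, ∀ j ≠ k, 1 ≤ a k j)
    (hc : (J + 2).choose 2 < ∑ k ∈ K, ∏ j ∈ {k}ᶜ, (a k j + 1)) (he : 3 * (J + 1) ≤ e) :
    ExistsNotLogConcave ι (#K + 1) e := by
  obtain ⟨s, -, hs⟩ := exists_subset_card_eq (s := univ) hι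
  obtain ⟨f, hfe, hfs, hfs'⟩ := exists_sum_eq_of_card_mul_le (s := s) (N := J + 1) (e := e)
    (card_pos.1 (by omega)) (by rwa [hs])
  refine existsNotLogConcave_of_insert_image (g := fun k => adjustDegree (a k) k e)
    hs hfe (fun k hk => ?_) hfs hfs' (fun k hk => ?_) ?_ ?_ he
  · exact sum_adjustDegree (by have := ha k hk; omega)
  · exact (sum_compl_adjustDegree _ _ _).trans_lt (ha k hk)
  · obtain ⟨k, hk, hak⟩ := hcover
    refine ⟨k, hk, fun j => ?_⟩
    obtain rfl | hj := eq_or_ne j k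
    · have := ha j hk
      rw [adjustDegree_self]
      omega
    · exact (hak j hj).trans_eq (adjustDegree_of_ne hj e).symm
  · refine hc.trans_eq (sum_congr rfl fun k _ => prod_congr rfl fun j hj => ?_)
    rw [adjustDegree_of_ne (by simpa using hj)]

end

theorem existsNotLogConcave_of_card_eq_three {e : ℕ} (hι : Fintype.card ι = 3) (he : 12 ≤ e) :
    ExistsNotLogConcave ι 4 e := by
  classical
  obtain ⟨k⟩ : Nonempty ι := Fintype.card_pos_iff.1 (by omega)
  have h := existsNotLogConcave_of_choose_lt (J := 3) (K := univ) (e := e) (fun _ _ => 1) hι.ge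
    (by simp [card_compl, hι]) ⟨k, by simp⟩ (by simp [card_compl, hι, Nat.choose]) he
  rwa [card_univ, hι] at h

lemma choose_four_mul_add_three_lt_five_pow {m : ℕ} (hm : 3 ≤ m) :
    (4 * m + 3).choose 2 < 5 ^ m := by
  have two_mul_choose (n : ℕ) : (n + 1) * n = (n + 1).choose 2 * 2 := by
    simpa using Nat.add_one_mul_choose_eq n 1
  induction m, hm using Nat.le_induction with
  | base => decide
  | succ m hm ih =>
    have hstep : (4 * (m + 1) + 3).choose 2 ≤ 5 * (4 * m + 3).choose 2 := by
      have := two_mul_choose (4 * (m + 1) + 2)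
      have := two_mul_choose (4 * m + 2)
      nlinarith
    calc (4 * (m + 1) + 3).choose 2 ≤ 5 * (4 * m + 3).choose 2 := hstep
      _ < 5 * 5 ^ m := by gcongr
      _ = 5 ^ (m + 1) := (pow_succ' 5 m).symm

theorem existsNotLogConcave_of_four_le_card {t e : ℕ} (hι : 4 ≤ Fintype.card ι) (ht : 2 ≤ t)
    (htι : t ≤ Fintype.card ι + 1) (he : 12 * Fintype.card ι ≤ e) :
    ExistsNotLogConcave ι t e := by
  classical
  obtain ⟨k⟩ : Nonempty ι := Fintype.card_pos_iff.1 (by omega)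
  obtain ⟨K, hkK, -, hK⟩ := exists_subsuperset_card_eq (s := {k}) (t := univ) (n := t - 1)
    (subset_univ _) (by simp; omega) (by simp; omega)
  have hk : k ∈ K := singleton_subset_iff.1 hkK
  obtain ⟨m, hm⟩ : ∃ m, Fintype.card ι = m + 1 := ⟨Fintype.card ι - 1, by omega⟩
  have h := existsNotLogConcave_of_choose_lt (J := 4 * m + 1) (K := K) (e := e)
    (fun l _ => if l = k then 4 else 0) (by omega) ?_ ⟨k, hk, by simp⟩ ?_ (by omega)
  · rwa [hK, Nat.sub_add_cancel (by omega)] at h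
  · intro l _
    split_ifs
    · simp [card_compl, hm, mul_comm]
    · simp
  · calc (4 * m + 3).choose 2 < 5 ^ m := choose_four_mul_add_three_lt_five_pow (by omega)
      _ = ∏ _j ∈ ({k} : Finset ι)ᶜ, ((if k = k then 4 else 0) + 1) := by simp [card_compl, hm]
      _ ≤ _ := single_le_sum_of_canonicallyOrdered
        (f := fun l => ∏ _j ∈ ({l} : Finset ι)ᶜ, ((if l = k then 4 else 0) + 1)) hk

end

/-- **Theorem (existence of non-log-concave pure `O`-sequences).**
For every pair `(r, t)` with either `r = 3` and `t = 4`, or `r ≥ 4` and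
`2 ≤ t ≤ r + 1`, and for all sufficiently large socle degrees `e`, there is a
set `M` of `t` distinct degree-`e` monomials in `r` variables, with every
variable dividing some element of `M` (so the pure `O`-sequence generated by
`M` has codimension `r`, type `t`, and socle degree `e`), whose pure
`O`-sequence `h i = #{monomials of degree i dividing some element of M}` is
not log-concave. -/
theorem stmt_16 (r t : ℕ)
    (hrt : (r = 3 ∧ t = 4) ∨ (4 ≤ r ∧ 2 ≤ t ∧ t ≤ r + 1)) :
    ∃ N : ℕ, ∀ e, N ≤ e →
      ∃ M : Finset (Fin r → ℕ),
        M.card = t ∧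
        (∀ a ∈ M, ∑ j, a j = e) ∧
        (∀ j : Fin r, ∃ a ∈ M, 1 ≤ a j) ∧
        ∃ i, 1 ≤ i ∧
          ({b : Fin r → ℕ | (∑ j, b j = i) ∧ ∃ a ∈ M, ∀ j, b j ≤ a j}.ncard) ^ 2 <
            {b : Fin r → ℕ | (∑ j, b j = i - 1) ∧ ∃ a ∈ M, ∀ j, b j ≤ a j}.ncard *
              {b : Fin r → ℕ | (∑ j, b j = i + 1) ∧ ∃ a ∈ M, ∀ j, b j ≤ a j}.ncard := by
  obtain ⟨rfl, rfl⟩ | ⟨hr, ht, htr⟩ := hrt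
  · exact ⟨12, fun e he => existsNotLogConcave_of_card_eq_three (Fintype.card_fin 3) he⟩
  · refine ⟨12 * r, fun e he => ?_⟩
    rw [← Fintype.card_fin r] at hr htr he
    exact existsNotLogConcave_of_four_le_card hr ht htr he
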